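/- For every integer k ≥ 16 there exists a numerical semigroup S with exactly k + 1 minimal generators such that Δ_0(S) ∩ [7k/8, k] = {k − 1, k}; that is, the only integers n with 7k/8 ≤ n ≤ k lying in Δ_0(S) are k − 1 and k. In particular, Δ_0(S) ∖ [1, max Δ_0(S)] complements can contain arbitrarily long gaps below the maximum. -/

import Mathlib

open Finset

/-- `Zfac a x`: the set of factorizations of `x` with respect to the generators `a`. -/
def Zfac {k : ℕ} (a : Fin k → ℕ) (x : ℕ) : Set (Fin k → ℕ) :=
  {z | ∑ j, z j * a j = x}

/-- The `∞`-length of a factorization: the maximum coordinate. -/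
def linf {k : ℕ} (z : Fin k → ℕ) : ℕ :=
  Finset.univ.sup z

/-- The `0`-length of a factorization: the size of its support. -/
def lzero {k : ℕ} (z : Fin k → ℕ) : ℕ :=
  (Finset.univ.filter fun i => z i ≠ 0).card

/-- `𝓛∞(x)`: the set of `∞`-lengths of factorizations of `x`. -/
def LinfSet {k : ℕ} (a : Fin k → ℕ) (x : ℕ) : Set ℕ :=
  linf '' Zfac a x

/-- `𝓛∞(x, i)`: `∞`-lengths of factorizations whose maximum coordinate is attained at `i`. -/
def LinfSetI {k : ℕ} (a : Fin k → ℕ) (x : ℕ) (i : Fin k) : Set ℕ :=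
  linf '' {z | z ∈ Zfac a x ∧ z i = linf z}

/-- `𝓛₀(x)`: the set of `0`-lengths of factorizations of `x`. -/
def LzeroSet {k : ℕ} (a : Fin k → ℕ) (x : ℕ) : Set ℕ :=
  lzero '' Zfac a x

/-- The set of differences between consecutive elements of a set `T ⊆ ℕ`. -/
def deltaSet (T : Set ℕ) : Set ℕ :=
  {d | ∃ u ∈ T, ∃ v ∈ T, u < v ∧ v - u = d ∧ ∀ t ∈ T, ¬(u < t ∧ t < v)}

/-- `Δ∞(x)`. -/
def DeltaInf {k : ℕ} (a : Fin k → ℕ) (x : ℕ) : Set ℕ := deltaSet (LinfSet a x)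

/-- `Δ∞(S) = ⋃ x ∈ S, Δ∞(x)` (for `x ∉ S` the contribution is empty). -/
def DeltaInfS {k : ℕ} (a : Fin k → ℕ) : Set ℕ := ⋃ x : ℕ, DeltaInf a x

/-- `Δ₀(x)`. -/
def DeltaZero {k : ℕ} (a : Fin k → ℕ) (x : ℕ) : Set ℕ := deltaSet (LzeroSet a x)

/-- `Δ₀(S) = ⋃ x ∈ S, Δ₀(x)` (for `x ∉ S` the contribution is empty). -/
def DeltaZeroS {k : ℕ} (a : Fin k → ℕ) : Set ℕ := ⋃ x : ℕ, DeltaZero a x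

/-- `a` is a system of minimal generators: no generator is a `ℕ`-combination of the others. -/
def MinimalGens {k : ℕ} (a : Fin k → ℕ) : Prop :=
  ∀ i : Fin k, ¬ ∃ z : Fin k → ℕ, z i = 0 ∧ ∑ j, z j * a j = a i


/-! ### Helper material -/

/-- Support size. -/
def sp {r : ℕ} (n : Fin r → ℕ) : ℕ := ∑ i, if n i ≠ 0 then 1 else 0

/-- Indicator of being nonzero. -/
def ind (n : ℕ) : ℕ := if n ≠ 0 then 1 else 0

/-- Value of a coefficient vector. -/
def vl {r : ℕ} (b n : Fin r → ℕ) : ℕ := ∑ i, n i * b i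

lemma ind_le (n : ℕ) : ind n ≤ 1 := by unfold ind; split_ifs <;> omega

lemma ind_pos {n : ℕ} (h : n ≠ 0) : ind n = 1 := by simp [ind, h]

lemma sp_le {r : ℕ} (n : Fin r → ℕ) : sp n ≤ r := by
  unfold sp
  calc _ ≤ ∑ i : Fin r, 1 := Finset.sum_le_sum (fun i _ => by split_ifs <;> omega)
    _ = r := by simp

lemma sp_full {r : ℕ} (n : Fin r → ℕ) (h : ∀ i, n i ≠ 0) : sp n = r := by
  simp [sp, h]

lemma sp_zero {r : ℕ} : sp (fun _ : Fin r => 0) = 0 := by simp [sp]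

lemma vl_add {r : ℕ} (b n m : Fin r → ℕ) : vl b (fun i => n i + m i) = vl b n + vl b m := by
  simp [vl, add_mul, Finset.sum_add_distrib]

lemma vl_const {r : ℕ} (b : Fin r → ℕ) (t : ℕ) :
    vl b (fun _ => t) = t * vl b (fun _ => 1) := by
  simp [vl, Finset.mul_sum]

lemma vl_single {r : ℕ} (b : Fin r → ℕ) (i : Fin r) (x : ℕ) :
    vl b (fun l => if l = i then x else 0) = x * b i := by
  simp [vl]

lemma sp_add {r : ℕ} (n m : Fin r → ℕ) : sp (fun i => n i + m i) ≤ sp n + sp m := by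
  unfold sp
  rw [← Finset.sum_add_distrib]
  refine Finset.sum_le_sum (fun i _ => ?_)
  show (if n i + m i ≠ 0 then 1 else 0) ≤ _
  split_ifs <;> omega

lemma sp_single {r : ℕ} (i : Fin r) (x : ℕ) : sp (fun l => if l = i then x else 0) ≤ 1 := by
  unfold sp
  calc _ ≤ ∑ l : Fin r, (if l = i then 1 else 0) :=
        Finset.sum_le_sum (fun l _ => by split_ifs <;> simp_all)
    _ = 1 := by simp

lemma short_of {r : ℕ} (b : Fin r → ℕ) (i j l : Fin r) (x y z v : ℕ)
    (h : x * b i + y * b j + z * b l = v) : ∃ n, vl b n = v ∧ sp n ≤ 3 := by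
  refine ⟨fun t => ((if t = i then x else 0) + (if t = j then y else 0)) +
    (if t = l then z else 0), ?_, ?_⟩
  · rw [vl_add, vl_add, vl_single, vl_single, vl_single, h]
  · have h1 := sp_add (fun t => (if t = i then x else 0) + (if t = j then y else 0))
      (fun t => if t = l then z else 0)
    have h2 := sp_add (fun t => (if t = i then x else 0)) (fun t => (if t = j then y else 0))
    have := sp_single i x
    have := sp_single j y
    have := sp_single l z
    omega

lemma pow_rigid : ∀ (r : ℕ) (n : ℕ → ℕ) (q : ℕ),
    ∑ j ∈ range r, n j * 2 ^ j + q + 1 = 2 ^ r → ∑ j ∈ range r, n j + 2 * q ≤ r →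
    q = 0 ∧ ∀ j < r, n j = 1 := by
  intro r
  induction r with
  | zero => intro n q h1 h2; simp at h1 h2; simp [h2]
  | succ r ih =>
    intro n q h1 h2
    rw [Finset.sum_range_succ'] at h1 h2
    have e : ∑ j ∈ range r, n (j + 1) * 2 ^ (j + 1)
        = 2 * ∑ j ∈ range r, n (j + 1) * 2 ^ j := by
      rw [Finset.mul_sum]
      exact Finset.sum_congr rfl (fun j _ => by ring)
    rw [e, pow_succ] at h1
    obtain ⟨q', hq'⟩ : ∃ q', n 0 + q = 2 * q' + 1 := ⟨(n 0 + q) / 2, by omega⟩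
    obtain ⟨h3, h4⟩ := ih (fun j => n (j + 1)) q' (by omega) (by omega)
    have h5 : ∑ j ∈ range r, n (j + 1) = r := by
      rw [Finset.sum_congr rfl (fun j hj => h4 j (Finset.mem_range.mp hj))]; simp
    refine ⟨by omega, ?_⟩
    intro j hj
    cases j with
    | zero => omega
    | succ j => exact h4 j (by omega)

/-- The properties of a block of generators. -/
def Block {r : ℕ} (b : Fin r → ℕ) (K : ℕ) : Prop :=
  (∀ n, vl b n = vl b (fun _ => 1) → ∀ i, n i = 1) ∧
  (∀ n, (∃ i, n i ≠ 0) → ∃ n', vl b n' = vl b (fun _ => 1) + vl b n ∧ sp n' ≤ 3) ∧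
  (∀ y, K ≤ y → ∃ n', vl b n' = y ∧ sp n' ≤ 3)

lemma two_pow_big (r : ℕ) (hr : 3 ≤ r) : 2 * r < 2 ^ r := by
  induction r, hr using Nat.le_induction with
  | base => norm_num
  | succ r h ih => rw [pow_succ]; omega

lemma block_exists (r : ℕ) (hr : 3 ≤ r) : ∃ (b : Fin r → ℕ) (K : ℕ), Block b K := by
  have hbig := two_pow_big r hr
  obtain ⟨D, hD⟩ : ∃ D, 2 ^ r = D + r := ⟨2 ^ r - r, by omega⟩
  have hDr : r < D := by omega
  set b : Fin r → ℕ := fun j => D + (D + 1) * (2 ^ (j : ℕ) - 1) with hb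
  have hval : ∀ n : Fin r → ℕ, vl b n = D * (∑ j, n j) +
      (D + 1) * ∑ j, n j * (2 ^ (j : ℕ) - 1) := by
    intro n
    simp only [vl, hb, mul_add, Finset.sum_add_distrib, Finset.mul_sum]
    congr 1
    · exact Finset.sum_congr rfl (fun j _ => by ring)
    · exact Finset.sum_congr rfl (fun j _ => by ring)
  have hcm : ∀ n : Fin r → ℕ, ∑ j, n j * (2 ^ (j : ℕ) - 1) + ∑ j, n j
      = ∑ j, n j * 2 ^ (j : ℕ) := by
    intro n
    rw [← Finset.sum_add_distrib]
    refine Finset.sum_congr rfl (fun j _ => ?_)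
    obtain ⟨p, hp⟩ : ∃ p, 2 ^ (j : ℕ) = p + 1 :=
      ⟨2 ^ (j : ℕ) - 1, by have := Nat.one_le_two_pow (n := (j : ℕ)); omega⟩
    rw [hp, Nat.add_sub_cancel]; ring
  have hone : ∑ j : Fin r, (1 : ℕ) * 2 ^ (j : ℕ) + 1 = 2 ^ r := by
    have h := Nat.geomSum_eq (le_refl 2) r
    rw [Fin.sum_univ_eq_sum_range (fun j => 1 * 2 ^ j) r]
    simp only [one_mul]
    rw [h]
    have := Nat.one_le_two_pow (n := r)
    simp; omega
  have hm1 : ∑ j : Fin r, (1 : ℕ) * (2 ^ (j : ℕ) - 1) + 1 = D := by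
    have := hcm (fun _ => 1)
    have h2 : ∑ j : Fin r, (1 : ℕ) = r := by simp
    omega
  have hs : vl b (fun _ => 1) = D * r + (D + 1) * (D - 1) := by
    rw [hval]
    have h2 : ∑ j : Fin r, (1 : ℕ) = r := by simp
    rw [h2]
    congr 2
    omega
  have hb0 : b ⟨0, by omega⟩ = D := by simp [hb]
  have hb1 : b ⟨1, by omega⟩ = 2 * D + 1 := by simp [hb]; ring
  obtain ⟨E, hE⟩ : ∃ E, D = E + 1 := ⟨D - 1, by omega⟩
  refine ⟨b, 2 * D * D, ?_, ?_, ?_⟩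
  · intro n hn
    rw [hs, hval] at hn
    have hc := hcm n
    set c := ∑ j, n j with hcdef
    set m := ∑ j, n j * (2 ^ (j : ℕ) - 1) with hmdef
    have hm : m = D - 1 := by
      have h1 : (D * c + (D + 1) * m) % D = (D * r + (D + 1) * (D - 1)) % D := by rw [hn]
      have h2 : m % D = (D - 1) % D := by
        have e1 : D * c + (D + 1) * m = m + D * (c + m) := by ring
        have e2 : D * r + (D + 1) * (D - 1) = (D - 1) + D * (r + (D - 1)) := by ring
        rw [e1, e2, Nat.add_mul_mod_self_left, Nat.add_mul_mod_self_left] at h1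
        exact h1
      rw [Nat.mod_eq_of_lt (show D - 1 < D by omega)] at h2
      have h3 := Nat.div_add_mod m D
      rcases Nat.eq_zero_or_pos (m / D) with h4 | h4
      · rw [h4] at h3; simp at h3; omega
      · exfalso
        have h5 : D * 1 ≤ D * (m / D) := Nat.mul_le_mul_left _ h4
        have h6 : 2 * D - 1 ≤ m := by omega
        have h7 : (D + 1) * (2 * D - 1) ≤ (D + 1) * m := Nat.mul_le_mul_left _ h6
        subst hE
        simp only [Nat.add_sub_cancel] at *
        have h8 : 2 * (E + 1) - 1 = 2 * E + 1 := by omega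
        rw [h8] at h7
        nlinarith
    have hc' : c = r := by
      rw [hm] at hn
      have : D * c = D * r := by omega
      exact Nat.eq_of_mul_eq_mul_left (by omega) this
    have key := pow_rigid r (fun j => if h : j < r then n ⟨j, h⟩ else 0) 0 ?_ ?_
    · intro i
      have := key.2 i i.2
      simpa using this
    · rw [← Fin.sum_univ_eq_sum_range (fun j => (if h : j < r then n ⟨j, h⟩ else 0) * 2 ^ j) r]
      simp
      omega
    · rw [← Fin.sum_univ_eq_sum_range (fun j => (if h : j < r then n ⟨j, h⟩ else 0)) r]
      simp
      omega
  · intro n hn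
    rw [hs, hval n]
    have hc1 : 1 ≤ ∑ j, n j := by
      obtain ⟨i, hi⟩ := hn
      have := Finset.single_le_sum (f := n) (fun j _ => Nat.zero_le _) (Finset.mem_univ i)
      omega
    obtain ⟨c, hc⟩ : ∃ c, ∑ j, n j = c + 1 := ⟨_, (Nat.sub_add_cancel hc1).symm⟩
    rw [hc]
    generalize ∑ j, n j * (2 ^ (j : ℕ) - 1) = m
    rcases Nat.eq_zero_or_pos m with rfl | hm
    · -- excess only in the smallest generator
      set t := Nat.log 2 (r + 1) with ht
      have ht1 : 2 ^ t ≤ r + 1 := Nat.pow_log_le_self 2 (by omega)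
      have ht2 : r + 1 < 2 ^ (t + 1) := Nat.lt_pow_succ_log_self (by norm_num) _
      have ht3 : 1 ≤ t := by
        rcases Nat.eq_zero_or_pos t with h | h
        · rw [h] at ht2; norm_num at ht2; omega
        · exact h
      have ht4 : t + 1 ≤ r := by
        have : t < 2 ^ t := Nat.lt_two_pow_self
        rcases Nat.lt_or_ge t r with h | h
        · omega
        · have : r = t := by omega
          rw [← this] at ht1; omega
      obtain ⟨q, hq⟩ : ∃ q, r = q + t + 1 := ⟨r - t - 1, by omega⟩
      obtain ⟨e, he⟩ : ∃ e, r + 1 = 2 ^ t + e := ⟨r + 1 - 2 ^ t, by omega⟩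
      obtain ⟨f, hf⟩ : ∃ f, 2 ^ t = f + e := ⟨2 ^ t - e, by rw [pow_succ] at ht2; omega⟩
      refine short_of b ⟨q + 1, by omega⟩ ⟨q, by omega⟩ ⟨0, by omega⟩ f (2 * e) c _ ?_
      rw [hb0]
      simp only [hb]
      obtain ⟨p, hp⟩ : ∃ p, 2 ^ q = p + 1 :=
        ⟨2 ^ q - 1, by have := Nat.one_le_two_pow (n := q); omega⟩
      have h1 : 2 ^ (q + 1) - 1 = 2 * p + 1 := by rw [pow_succ]; omega
      have h2 : 2 ^ q - 1 = p := by omega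
      have h3 : 2 ^ r = 2 * (p + 1) * (f + e) := by
        rw [← hp, ← hf, hq]; ring
      rw [h1, h2]
      have h4 : f + 2 * e = r + 1 := by omega
      have h5 : f * (2 * p + 1) + 2 * e * p = D - 1 := by
        have : 2 * (p + 1) * (f + e) = f * (2 * p + 1) + 2 * e * p + (f + 2 * e) := by ring
        omega
      calc f * (D + (D + 1) * (2 * p + 1)) + 2 * e * (D + (D + 1) * p) + c * D
          = D * (f + 2 * e) + (D + 1) * (f * (2 * p + 1) + 2 * e * p) + c * D := by ring
        _ = _ := by rw [h4, h5]; ring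
    · obtain ⟨m', hm'⟩ : ∃ m', m = m' + 1 := ⟨m - 1, by omega⟩
      have h1 := Nat.div_add_mod m' D
      have h2 : m' % D < D := Nat.mod_lt _ (by omega)
      set q := m' / D
      set ρ := m' % D
      obtain ⟨x, hx⟩ : ∃ x, D = ρ + x := ⟨D - ρ, by omega⟩
      refine short_of b ⟨0, by omega⟩ ⟨1, by omega⟩ ⟨0, by omega⟩
        (r + (c + 1) + q * (D + 1) + 1 + x) ρ 0 _ ?_
      rw [hb0, hb1, hm', ← h1]
      have h3 : D * r + (D + 1) * (D - 1) + (D * (c + 1) + (D + 1) * (D * q + ρ + 1))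
          = D * r + D * (c + 1) + (D + 1) * (D * q + ρ + D) := by
        subst hE; simp only [Nat.add_sub_cancel]; ring
      rw [h3]
      have h4 : x * D = D * D - ρ * D := by
        have : D * D = (ρ + x) * D := by rw [← hx]
        rw [this]; rw [add_mul]; omega
      have h5 : D * D = ρ * D + x * D := by
        have : D * D = (ρ + x) * D := by rw [← hx]
        rw [this]; ring
      linear_combination -h5
  · intro y hy
    have h1 := Nat.div_add_mod y D
    have h2 : y % D < D := Nat.mod_lt _ (by omega)
    have h3 : 2 * D ≤ y / D := by
      rw [Nat.le_div_iff_mul_le (by omega)]; exact hy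
    obtain ⟨x, hx⟩ : ∃ x, y / D = 2 * (y % D) + x := ⟨y / D - 2 * (y % D), by omega⟩
    refine short_of b ⟨0, by omega⟩ ⟨1, by omega⟩ ⟨0, by omega⟩ x (y % D) 0 _ ?_
    rw [hb0, hb1]
    rw [hx] at h1
    linear_combination h1


/-- Lengths described by a triple (coefficient of the extra generator, two blocks). -/
def LS {r₁ r₂ : ℕ} (b : Fin r₁ → ℕ) (c : Fin r₂ → ℕ) (d₁ d₂ s d x : ℕ) : Set ℕ :=
  {l | ∃ (n₀ : ℕ) (n : Fin r₁ → ℕ) (p : Fin r₂ → ℕ),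
    n₀ * s + d * (d₁ * vl b n + d₂ * vl c p) = x ∧ ind n₀ + sp n + sp p = l}

/-- Comparison of two decompositions of the same element into block values. -/
lemma split_cmp {d₁ d₂ B C B' C' : ℕ} (hco : Nat.Coprime d₁ d₂)
    (hd₁ : 0 < d₁) (hd₂ : 0 < d₂)
    (h : d₁ * B + d₂ * C = d₁ * B' + d₂ * C') :
    (B = B' ∧ C = C') ∨ (B' + d₂ ≤ B ∧ C + d₁ ≤ C') ∨ (B + d₂ ≤ B' ∧ C' + d₁ ≤ C) := by
  have aux : ∀ {B C B' C' : ℕ}, d₁ * B + d₂ * C = d₁ * B' + d₂ * C' → B' < B →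
      B' + d₂ ≤ B ∧ C + d₁ ≤ C' := by
    intro B C B' C' h hlt
    obtain ⟨β, rfl⟩ := Nat.exists_eq_add_of_lt hlt
    have hC : C < C' := by
      by_contra hcon
      have h1 : d₂ * C' ≤ d₂ * C := Nat.mul_le_mul_left _ (by omega)
      have h2 : d₁ * B' < d₁ * (B' + β + 1) := Nat.mul_lt_mul_of_pos_left hlt hd₁
      omega
    obtain ⟨γ, rfl⟩ := Nat.exists_eq_add_of_lt hC
    have h3 : d₁ * (β + 1) = d₂ * (γ + 1) := by
      linear_combination h
    have h4 : d₂ ∣ β + 1 := (hco.symm).dvd_of_dvd_mul_left ⟨_, h3⟩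
    have h5 : d₁ ∣ γ + 1 := hco.dvd_of_dvd_mul_left ⟨_, h3.symm⟩
    have := Nat.le_of_dvd (by omega) h4
    have := Nat.le_of_dvd (by omega) h5
    omega
  rcases lt_trichotomy B B' with hlt | heq | hlt
  · right; right
    exact aux h.symm hlt
  · left
    subst heq
    exact ⟨rfl, Nat.eq_of_mul_eq_mul_left hd₂ (by omega)⟩
  · right; left
    exact aux h hlt

section Core

variable {r₁ r₂ : ℕ} {b : Fin r₁ → ℕ} {c : Fin r₂ → ℕ} {K₁ K₂ d₁ d₂ s d k : ℕ}

/-- All assumptions collected. -/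
structure Setup (b : Fin r₁ → ℕ) (c : Fin r₂ → ℕ) (K₁ K₂ d₁ d₂ s d k : ℕ) : Prop where
  hb : Block b K₁
  hc : Block c K₂
  co : Nat.Coprime d₁ d₂
  h1 : vl c (fun _ => 1) < d₁
  h1' : K₂ ≤ d₁
  h2 : vl b (fun _ => 1) < d₂
  h2' : K₁ ≤ d₂
  hs : s = d₁ * vl b (fun _ => 1) + d₂ * vl c (fun _ => 1)
  hd : d = s + 1
  hk : 16 ≤ k
  hr : r₁ + r₂ = k
  hr1 : 2 * r₁ ≤ k + 1
  hr2 : 2 * r₂ ≤ k + 1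

lemma vl_zero {r : ℕ} (b : Fin r → ℕ) : vl b (fun _ => 0) = 0 := by simp [vl]

lemma Block.pos {r : ℕ} {b : Fin r → ℕ} {K : ℕ} (h : Block b K) (i : Fin r) : 0 < b i := by
  by_contra hcon
  have h0 : b i = 0 := by omega
  have := h.1 (fun l => 1 + if l = i then 1 else 0) (by rw [vl_add, vl_single, h0]; simp) i
  simp at this

lemma Block.eq_zero {r : ℕ} {b : Fin r → ℕ} {K : ℕ} (h : Block b K) {n : Fin r → ℕ}
    (hn : vl b n = 0) : ∀ i, n i = 0 := by
  intro i
  have h1 : n i * b i = 0 := by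
    have := (Finset.sum_eq_zero_iff (s := Finset.univ) (f := fun i => n i * b i)).mp hn
    exact this i (Finset.mem_univ i)
  have := h.pos i
  rcases Nat.mul_eq_zero.mp h1 with h | h
  · exact h
  · omega

lemma Setup.rigid (S : Setup b c K₁ K₂ d₁ d₂ s d k) {n : Fin r₁ → ℕ} {p : Fin r₂ → ℕ}
    (h : d₁ * vl b n + d₂ * vl c p = s) : (∀ i, n i = 1) ∧ ∀ i, p i = 1 := by
  have h1 := S.h1
  have h2 := S.h2
  rw [S.hs] at h
  rcases split_cmp S.co (by omega) (by omega) h with ⟨hB, hC⟩ | ⟨hB, hC⟩ | ⟨hB, hC⟩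
  · exact ⟨S.hb.1 n hB, S.hc.1 p hC⟩
  · omega
  · omega

lemma Setup.spos (S : Setup b c K₁ K₂ d₁ d₂ s d k) : 0 < s := by
  by_contra hcon
  have h0 : s = 0 := by omega
  have h := S.rigid (n := fun _ => 0) (p := fun _ => 0) (by rw [vl_zero, vl_zero]; omega)
  have := S.hr
  have := S.hk
  have := S.hr2
  have := h.1 ⟨0, by omega⟩
  simp at this

/-- Coefficients of the extra generator agree modulo `d`. -/
lemma coef_cmp {s d n m V W : ℕ} (hd : d = s + 1)
    (h : n * s + d * V = m * s + d * W) (hle : m ≤ n) :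
    ∃ t, n = m + d * t ∧ W = V + t * s := by
  obtain ⟨e, rfl⟩ := Nat.exists_eq_add_of_le hle
  have h1 : e * s + d * V = d * W := by
    have : (m + e) * s = m * s + e * s := by ring
    omega
  have h2 : d ∣ e * s := (Nat.dvd_add_left (Dvd.intro _ rfl)).mp ⟨W, h1⟩
  have h3 : Nat.Coprime d s := by rw [hd]; simp
  obtain ⟨t, rfl⟩ := h3.dvd_of_dvd_mul_right h2
  refine ⟨t, rfl, ?_⟩
  have h4 : d * W = d * (V + t * s) := by rw [← h1]; ring
  exact Nat.eq_of_mul_eq_mul_left (by omega) h4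

/-- Two factorizations with the same extra coefficient, one short and one long,
can be mixed. -/
lemma Setup.mix (S : Setup b c K₁ K₂ d₁ d₂ s d k) {x n₀ u v : ℕ}
    {n m : Fin r₁ → ℕ} {p q : Fin r₂ → ℕ}
    (hw : n₀ * s + d * (d₁ * vl b n + d₂ * vl c p) = x)
    (hV : d₁ * vl b m + d₂ * vl c q = d₁ * vl b n + d₂ * vl c p)
    (hu : ind n₀ + sp n + sp p = u) (hv : v ≤ 1 + sp m + sp q)
    (huv : 7 * k + 8 * u ≤ 8 * v) :
    ∃ l ∈ LS b c d₁ d₂ s d x, u < l ∧ l < v := by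
  have h1 := S.h1
  have h2 := S.h2
  have h1' := S.h1'
  have h2' := S.h2'
  have hk := S.hk
  have hr := S.hr
  have hr1 := S.hr1
  have hr2 := S.hr2
  have := sp_le m
  have := sp_le q
  have := ind_le n₀
  rcases split_cmp S.co (by omega) (by omega) hV with ⟨hB, hC⟩ | ⟨hB, hC⟩ | ⟨hB, hC⟩
  · refine ⟨_, ⟨n₀, n, q, ?_, rfl⟩, ?_, ?_⟩
    · rw [hC]; exact hw
    · omega
    · omega
  · obtain ⟨n', hn', hs'⟩ := S.hb.2.2 (vl b m) (by omega)
    refine ⟨_, ⟨n₀, n', q, ?_, rfl⟩, ?_, ?_⟩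
    · rw [hn', hV]; exact hw
    · omega
    · omega
  · obtain ⟨p', hp', hs'⟩ := S.hc.2.2 (vl c q) (by omega)
    refine ⟨_, ⟨n₀, m, p', ?_, rfl⟩, ?_, ?_⟩
    · rw [hp', hV]; exact hw
    · omega
    · omega

lemma Setup.forward (S : Setup b c K₁ K₂ d₁ d₂ s d k) {x u v : ℕ}
    (hu : u ∈ LS b c d₁ d₂ s d x) (hv : v ∈ LS b c d₁ d₂ s d x)
    (huv : 7 * k + 8 * u ≤ 8 * v)
    (hgap : ∀ t ∈ LS b c d₁ d₂ s d x, ¬(u < t ∧ t < v)) :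
    v = u + (k - 1) ∨ v = u + k := by
  have hk := S.hk
  have hr := S.hr
  have hr1 := S.hr1
  have hr2 := S.hr2
  obtain ⟨n₀, n, p, hw, hlu⟩ := hu
  obtain ⟨m₀, m, q, hz, hlv⟩ := hv
  have := sp_le m
  have := sp_le q
  have hin := ind_le n₀
  have him := ind_le m₀
  have hshift : ∀ t : ℕ, d₁ * vl b (fun i => n i + t) + d₂ * vl c (fun i => p i + t)
      = d₁ * vl b n + d₂ * vl c p + t * s := by
    intro t
    rw [vl_add b n (fun _ => t), vl_add c p (fun _ => t), vl_const b t, vl_const c t, S.hs]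
    ring
  rcases Nat.lt_or_ge n₀ m₀ with hlt | hge
  · exfalso
    obtain ⟨t, ht, hV⟩ := coef_cmp S.hd (hz.trans hw.symm) hlt.le
    have ht1 : t ≠ 0 := by rintro rfl; omega
    have hV' : d₁ * vl b (fun i => m i + t) + d₂ * vl c (fun i => q i + t)
        = d₁ * vl b n + d₂ * vl c p := by
      rw [vl_add b m (fun _ => t), vl_add c q (fun _ => t), vl_const b t, vl_const c t, hV, S.hs]
      ring
    have f1 := sp_full (fun i => m i + t) (fun i => by omega)
    have f2 := sp_full (fun i => q i + t) (fun i => by omega)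
    obtain ⟨l, hl, h⟩ := S.mix hw hV' hlu (v := v) (by omega) huv
    exact hgap l hl h
  · obtain ⟨t, ht, hV⟩ := coef_cmp S.hd (hw.trans hz.symm) hge
    rcases Nat.eq_zero_or_pos t with rfl | htpos
    · exfalso
      have hnm : n₀ = m₀ := by simpa using ht
      obtain ⟨l, hl, h⟩ := S.mix hw (by simpa using hV) hlu (v := v) (by omega) huv
      exact hgap l hl h
    · have hn0 : n₀ ≠ 0 := by
        have : 0 < d * t := Nat.mul_pos (by have := S.hd; omega) htpos
        omega
      have hi := ind_pos hn0
      obtain ⟨t', rfl⟩ : ∃ t', t = t' + 1 := ⟨t - 1, by omega⟩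
      by_cases hnb : ∃ i, n i + t' ≠ 0
      · exfalso
        obtain ⟨n', hn', hs'⟩ := S.hb.2.1 (fun i => n i + t') hnb
        have f2 := sp_full (fun i => p i + (t' + 1)) (fun i => by omega)
        refine hgap _ ⟨m₀, n', fun i => p i + (t' + 1), ?_, rfl⟩ ⟨by omega, by omega⟩
        rw [← hz, hV, ← hshift]
        have : vl b n' = vl b (fun i => n i + (t' + 1)) := by
          rw [hn', vl_add b n (fun _ => t'), vl_add b n (fun _ => t' + 1), vl_const b t',
            vl_const b (t' + 1)]
          ring
        rw [this]
      · by_cases hpc : ∃ i, p i + t' ≠ 0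
        · exfalso
          obtain ⟨p', hp', hs'⟩ := S.hc.2.1 (fun i => p i + t') hpc
          have f2 := sp_full (fun i => n i + (t' + 1)) (fun i => by omega)
          refine hgap _ ⟨m₀, fun i => n i + (t' + 1), p', ?_, rfl⟩ ⟨by omega, by omega⟩
          rw [← hz, hV, ← hshift]
          have : vl c p' = vl c (fun i => p i + (t' + 1)) := by
            rw [hp', vl_add c p (fun _ => t'), vl_add c p (fun _ => t' + 1), vl_const c t',
              vl_const c (t' + 1)]
            ring
          rw [this]
        · push Not at hnb hpc
          have hn : n = fun _ => 0 := by funext i; have := hnb i; omega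
          have hp : p = fun _ => 0 := by funext i; have := hpc i; omega
          have ht' : t' = 0 := by have := hnb ⟨0, by omega⟩; omega
          subst hn hp ht'
          rw [vl_zero, vl_zero] at hV
          obtain ⟨e1, e2⟩ := S.rigid (n := m) (p := q) (by rw [hV]; ring)
          have f1 := sp_full m (fun i => by rw [e1 i]; omega)
          have f2 := sp_full q (fun i => by rw [e2 i]; omega)
          rw [sp_zero, sp_zero] at hlu
          omega

/-- Lengths of the elements `d * s + ε * s`, `ε ∈ {0, 1}`. -/
lemma Setup.lengths (S : Setup b c K₁ K₂ d₁ d₂ s d k) (ε : ℕ) (hε : ε ≤ 1) {l : ℕ}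
    (hl : l ∈ LS b c d₁ d₂ s d (d * s + ε * s)) : l = 1 ∨ l = k + ε := by
  have hr := S.hr
  have hsp := S.spos
  have hd := S.hd
  obtain ⟨n₀, n, p, hw, rfl⟩ := hl
  have hx : n₀ * s + d * (d₁ * vl b n + d₂ * vl c p) = ε * s + d * s := by rw [hw]; ring
  rcases Nat.lt_or_ge n₀ ε with hlt | hge
  · exfalso
    obtain ⟨t, ht, hV⟩ := coef_cmp hd hx.symm hlt.le
    rcases Nat.eq_zero_or_pos t with rfl | h
    · omega
    · have : d * 1 ≤ d * t := Nat.mul_le_mul_left _ h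
      omega
  · obtain ⟨t, ht, hV⟩ := coef_cmp hd hx hge
    rcases Nat.eq_zero_or_pos t with rfl | h
    · right
      obtain ⟨e1, e2⟩ := S.rigid (n := n) (p := p) (by omega)
      have f1 := sp_full n (fun i => by rw [e1 i]; omega)
      have f2 := sp_full p (fun i => by rw [e2 i]; omega)
      have : ind n₀ = ε := by
        have : n₀ = ε := by omega
        subst this
        unfold ind
        split_ifs <;> omega
      omega
    · left
      have h1 : 1 * s ≤ t * s := Nat.mul_le_mul_right _ h
      have hz : d₁ * vl b n + d₂ * vl c p = 0 := by omega
      have h3 := S.h1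
      have h4 := S.h2
      have hB : vl b n = 0 := by
        rcases Nat.mul_eq_zero.mp (Nat.add_eq_zero_iff.mp hz).1 with h | h <;> omega
      have hC : vl c p = 0 := by
        rcases Nat.mul_eq_zero.mp (Nat.add_eq_zero_iff.mp hz).2 with h | h <;> omega
      have hn : n = fun _ => 0 := funext (S.hb.eq_zero hB)
      have hp : p = fun _ => 0 := funext (S.hc.eq_zero hC)
      have hn0 : n₀ ≠ 0 := by
        have : 0 < d * t := Nat.mul_pos (by omega) h
        omega
      rw [hn, hp, sp_zero, sp_zero, ind_pos hn0]

lemma Setup.backward (S : Setup b c K₁ K₂ d₁ d₂ s d k) (ε : ℕ) (hε : ε ≤ 1) :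
    k + ε - 1 ∈ deltaSet (LS b c d₁ d₂ s d (d * s + ε * s)) := by
  have hk := S.hk
  have hr := S.hr
  have hd := S.hd
  refine ⟨1, ⟨d + ε, fun _ => 0, fun _ => 0, ?_, ?_⟩, k + ε,
    ⟨ε, fun _ => 1, fun _ => 1, ?_, ?_⟩, by omega, rfl, ?_⟩
  · rw [vl_zero, vl_zero]; ring
  · rw [sp_zero, sp_zero, ind_pos (by omega)]
  · rw [← S.hs]; ring
  · rw [sp_full _ (fun i => by omega), sp_full _ (fun i => by omega)]
    have : ind ε = ε := by unfold ind; split_ifs <;> omega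
    omega
  · intro t ht h
    rcases S.lengths ε hε ht with h' | h' <;> omega

end Core

/-- The generators, on a structured index type. -/
def gens {r₁ r₂ : ℕ} (b : Fin r₁ → ℕ) (c : Fin r₂ → ℕ) (d₁ d₂ s d : ℕ) :
    Option (Fin r₁ ⊕ Fin r₂) → ℕ
  | none => s
  | some (Sum.inl i) => d * (d₁ * b i)
  | some (Sum.inr i) => d * (d₂ * c i)

/-- Coefficient vectors on a structured index type. -/
def coefs {r₁ r₂ : ℕ} (n₀ : ℕ) (n : Fin r₁ → ℕ) (p : Fin r₂ → ℕ) :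
    Option (Fin r₁ ⊕ Fin r₂) → ℕ
  | none => n₀
  | some (Sum.inl i) => n i
  | some (Sum.inr i) => p i

lemma sum_gens {r₁ r₂ k : ℕ} (b : Fin r₁ → ℕ) (c : Fin r₂ → ℕ) (d₁ d₂ s d : ℕ)
    (e : Fin (k + 1) ≃ Option (Fin r₁ ⊕ Fin r₂)) (n₀ : ℕ) (n : Fin r₁ → ℕ) (p : Fin r₂ → ℕ) :
    ∑ j, coefs n₀ n p (e j) * gens b c d₁ d₂ s d (e j)
      = n₀ * s + d * (d₁ * vl b n + d₂ * vl c p) := by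
  rw [Equiv.sum_comp e (fun t => coefs n₀ n p t * gens b c d₁ d₂ s d t),
    Fintype.sum_option, Fintype.sum_sum_type]
  simp only [coefs, gens, vl, mul_add, Finset.mul_sum]
  congr 2
  · exact Finset.sum_congr rfl (fun i _ => by ring)
  · exact Finset.sum_congr rfl (fun i _ => by ring)

lemma lzero_coefs {r₁ r₂ k : ℕ} (e : Fin (k + 1) ≃ Option (Fin r₁ ⊕ Fin r₂))
    (n₀ : ℕ) (n : Fin r₁ → ℕ) (p : Fin r₂ → ℕ) :
    lzero (fun j => coefs n₀ n p (e j)) = ind n₀ + sp n + sp p := by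
  unfold lzero
  rw [Finset.card_filter,
    Equiv.sum_comp e (fun t => if coefs n₀ n p t ≠ 0 then 1 else 0),
    Fintype.sum_option, Fintype.sum_sum_type]
  simp only [coefs, ind, sp, add_assoc]
  congr!

lemma exists_coefs {r₁ r₂ k : ℕ} (e : Fin (k + 1) ≃ Option (Fin r₁ ⊕ Fin r₂))
    (z : Fin (k + 1) → ℕ) : ∃ n₀ n p, z = fun j => coefs (r₁ := r₁) (r₂ := r₂) n₀ n p (e j) := by
  refine ⟨z (e.symm none), fun i => z (e.symm (some (Sum.inl i))),
    fun i => z (e.symm (some (Sum.inr i))), ?_⟩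
  funext j
  obtain ⟨t, rfl⟩ := e.symm.surjective j
  rw [Equiv.apply_symm_apply]
  rcases t with _ | (i | i) <;> rfl

lemma LzeroSet_eq {r₁ r₂ k : ℕ} (b : Fin r₁ → ℕ) (c : Fin r₂ → ℕ) (d₁ d₂ s d : ℕ)
    (e : Fin (k + 1) ≃ Option (Fin r₁ ⊕ Fin r₂)) (x : ℕ) :
    LzeroSet (fun j => gens b c d₁ d₂ s d (e j)) x = LS b c d₁ d₂ s d x := by
  ext l
  constructor
  · rintro ⟨z, hz, rfl⟩
    obtain ⟨n₀, n, p, rfl⟩ := exists_coefs e z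
    refine ⟨n₀, n, p, ?_, (lzero_coefs e n₀ n p).symm⟩
    rw [← sum_gens b c d₁ d₂ s d e]
    exact hz
  · rintro ⟨n₀, n, p, hx, rfl⟩
    refine ⟨fun j => coefs n₀ n p (e j), ?_, lzero_coefs e n₀ n p⟩
    show ∑ j, _ = x
    rw [sum_gens b c d₁ d₂ s d e]
    exact hx

lemma dvd_of_block {r : ℕ} {b : Fin r → ℕ} {K : ℕ} (h : Block b K) {f d : ℕ}
    (hf : ∀ i, f ∣ d * b i) : f ∣ d := by
  have aux : ∀ y, K ≤ y → f ∣ d * y := by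
    intro y hy
    obtain ⟨n, rfl, -⟩ := h.2.2 y hy
    rw [vl, Finset.mul_sum]
    refine Finset.dvd_sum (fun i _ => ?_)
    have : d * (n i * b i) = n i * (d * b i) := by ring
    rw [this]
    exact (hf i).mul_left _
  have h1 := aux K le_rfl
  have h2 := aux (K + 1) (by omega)
  rw [mul_add, mul_one] at h2
  exact (Nat.dvd_add_right h1).mp h2

lemma Setup.gcd_one {r₁ r₂ : ℕ} {b : Fin r₁ → ℕ} {c : Fin r₂ → ℕ}
    {K₁ K₂ d₁ d₂ s d k : ℕ} (S : Setup b c K₁ K₂ d₁ d₂ s d k)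
    (e : Fin (k + 1) ≃ Option (Fin r₁ ⊕ Fin r₂)) :
    Finset.univ.gcd (fun j => gens b c d₁ d₂ s d (e j)) = 1 := by
  set f := Finset.univ.gcd (fun j => gens b c d₁ d₂ s d (e j)) with hf
  have hdvd : ∀ t, f ∣ gens b c d₁ d₂ s d t := by
    intro t
    have := Finset.gcd_dvd (f := fun j => gens b c d₁ d₂ s d (e j)) (Finset.mem_univ (e.symm t))
    simpa [← hf] using this
  have h0 : f ∣ s := hdvd none
  have hco : Nat.Coprime f d := by
    have : Nat.Coprime s d := by rw [S.hd]; simp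
    exact Nat.Coprime.coprime_dvd_left h0 this
  have h1 : f ∣ d₁ := dvd_of_block S.hb (fun i =>
    hco.dvd_of_dvd_mul_left (hdvd (some (Sum.inl i))))
  have h2 : f ∣ d₂ := dvd_of_block S.hc (fun i =>
    hco.dvd_of_dvd_mul_left (hdvd (some (Sum.inr i))))
  exact Nat.eq_one_of_dvd_coprimes S.co h1 h2

lemma Setup.minimal {r₁ r₂ : ℕ} {b : Fin r₁ → ℕ} {c : Fin r₂ → ℕ}
    {K₁ K₂ d₁ d₂ s d k : ℕ} (S : Setup b c K₁ K₂ d₁ d₂ s d k)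
    (e : Fin (k + 1) ≃ Option (Fin r₁ ⊕ Fin r₂)) :
    MinimalGens (fun j => gens b c d₁ d₂ s d (e j)) := by
  have hd := S.hd
  have hsp := S.spos
  have hr := S.hr
  have hk := S.hk
  have hr1 := S.hr1
  have hr2 := S.hr2
  have hdpos : 0 < d := by omega
  -- a common argument for the two blocks
  have common : ∀ (n₀ : ℕ) (n : Fin r₁ → ℕ) (p : Fin r₂ → ℕ) (n' : Fin r₁ → ℕ)
      (p' : Fin r₂ → ℕ) (W : ℕ), n₀ * s + d * (d₁ * vl b n + d₂ * vl c p) = d * W →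
      W + (d₁ * vl b n' + d₂ * vl c p') = s → (∃ i, n' i ≠ 0) →
      (∀ i, n i + n' i = 1) ∧ (∀ i, p i + p' i = 1) := by
    intro n₀ n p n' p' W h hW ⟨i, hi⟩
    obtain ⟨t, ht, hV⟩ := coef_cmp (m := 0) hd (h.trans (by ring : d * W = 0 * s + d * W))
      (Nat.zero_le _)
    have hpos : 0 < d₁ * vl b n' := by
      refine Nat.mul_pos (by have := S.h1; omega) ?_
      rcases Nat.eq_zero_or_pos (vl b n') with h0 | h0
      · exact absurd (S.hb.eq_zero h0 i) hi
      · exact h0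
    have ht0 : t = 0 := by
      by_contra hne
      have : 1 * s ≤ t * s := Nat.mul_le_mul_right _ (by omega)
      omega
    subst ht0
    apply S.rigid
    rw [vl_add b n n', vl_add c p p']
    have : d₁ * (vl b n + vl b n') + d₂ * (vl c p + vl c p')
      = (d₁ * vl b n + d₂ * vl c p) + (d₁ * vl b n' + d₂ * vl c p') := by ring
    omega
  rintro j ⟨z, hz0, hz⟩
  obtain ⟨n₀, n, p, rfl⟩ := exists_coefs e z
  rw [sum_gens b c d₁ d₂ s d e] at hz
  obtain ⟨t, rfl⟩ := e.symm.surjective j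
  simp only [Equiv.apply_symm_apply] at hz hz0
  rcases t with _ | (i | i)
  · simp only [coefs] at hz0
    simp only [gens] at hz
    subst hz0
    have h1 : d ∣ s := ⟨d₁ * vl b n + d₂ * vl c p, by omega⟩
    have := Nat.le_of_dvd hsp h1
    omega
  · simp only [coefs] at hz0
    simp only [gens] at hz
    -- complement of the unit vector
    have hv : vl b (fun l => 1 - if l = i then 1 else 0) + b i = vl b (fun _ => 1) := by
      have h1 := vl_single b i 1
      rw [one_mul] at h1
      rw [← h1, ← vl_add]
      congr 1
      funext l
      split_ifs <;> rfl
    have h := common n₀ n p (fun l => 1 - if l = i then 1 else 0) (fun _ => 1) _ hz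
      (by rw [S.hs, ← hv]; ring) ?_
    · have := h.1 i
      simp [hz0] at this
    · have : ∃ l : Fin r₁, l ≠ i := by
        haveI : Nontrivial (Fin r₁) := Fin.nontrivial_iff_two_le.mpr (by omega)
        exact exists_ne i
      obtain ⟨l, hl⟩ := this
      exact ⟨l, by simp [hl]⟩
  · simp only [coefs] at hz0
    simp only [gens] at hz
    have hv : vl c (fun l => 1 - if l = i then 1 else 0) + c i = vl c (fun _ => 1) := by
      have h1 := vl_single c i 1
      rw [one_mul] at h1
      rw [← h1, ← vl_add]
      congr 1
      funext l
      split_ifs <;> rfl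
    have h := common n₀ n p (fun _ => 1) (fun l => 1 - if l = i then 1 else 0) _ hz
      (by rw [S.hs, ← hv]; ring) ⟨⟨0, by omega⟩, by omega⟩
    have := h.2 i
    simp [hz0] at this

lemma setup_exists (k : ℕ) (hk : 16 ≤ k) :
    ∃ (r₁ r₂ : ℕ) (b : Fin r₁ → ℕ) (c : Fin r₂ → ℕ) (K₁ K₂ d₁ d₂ s d : ℕ),
      Setup b c K₁ K₂ d₁ d₂ s d k := by
  obtain ⟨b, K₁, hb⟩ := block_exists (k / 2) (by omega)
  obtain ⟨c, K₂, hc⟩ := block_exists (k - k / 2) (by omega)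
  refine ⟨k / 2, k - k / 2, b, c, K₁, K₂,
    K₁ + K₂ + vl b (fun _ => 1) + vl c (fun _ => 1) + 1,
    K₁ + K₂ + vl b (fun _ => 1) + vl c (fun _ => 1) + 1 + 1, _, _,
    ⟨hb, hc, by simp, by omega, by omega, by omega, by omega, rfl, rfl, hk,
      by omega, by omega, by omega⟩⟩

/-- For every `k ≥ 16` there is a numerical semigroup `S` with exactly `k + 1` minimal
generators such that the only `n` with `7k/8 ≤ n ≤ k` lying in `Δ₀(S)` are `k − 1`
and `k`. -/
theorem stmt_19 (k : ℕ) (hk : 16 ≤ k) :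
    ∃ a : Fin (k + 1) → ℕ,
      Finset.univ.gcd a = 1 ∧ MinimalGens a ∧
      {n : ℕ | n ∈ DeltaZeroS a ∧ 7 * k ≤ 8 * n ∧ n ≤ k} = {k - 1, k} := by
  obtain ⟨r₁, r₂, b, c, K₁, K₂, d₁, d₂, s, d, S⟩ := setup_exists k hk
  have hcard : Fintype.card (Fin (k + 1)) = Fintype.card (Option (Fin r₁ ⊕ Fin r₂)) := by
    simp [S.hr]
  have e : Fin (k + 1) ≃ Option (Fin r₁ ⊕ Fin r₂) := Fintype.equivOfCardEq hcard
  refine ⟨fun j => gens b c d₁ d₂ s d (e j), S.gcd_one e, S.minimal e, ?_⟩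
  ext δ
  simp only [Set.mem_setOf_eq, Set.mem_insert_iff, Set.mem_singleton_iff, DeltaZeroS,
    Set.mem_iUnion, DeltaZero, LzeroSet_eq]
  constructor
  · rintro ⟨⟨x, u, hu, v, hv, huv, rfl, hgap⟩, h1, h2⟩
    have := S.forward hu hv (by omega) hgap
    omega
  · rintro (rfl | rfl)
    · exact ⟨⟨_, S.backward 0 (by omega)⟩, by omega, by omega⟩
    · exact ⟨⟨_, S.backward 1 (by omega)⟩, by omega, by omega⟩
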